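/- Assume ρ_{S,B}(T) ≠ ∅. Then the maps s ↦ S_{L,B}^{-1}(s,T) and s ↦ S_{R,B}^{-1}(s,T), from the open set ρ_{S,B}(T) ⊆ ℍ ≅ ℝ⁴ to the Banach space of bounded real-linear operators on V (operator norm), are continuously differentiable. -/

import Mathlib

/-- A two-sided Banach module structure over the quaternions `ℍ = Quaternion ℝ` on a real
Banach space `V`: commuting left (`lm`) and right (`rm`) `ℍ`-module structures, compatible
with the real vector space structure, with a norm bound `‖a·v‖, ‖v·a‖ ≤ C|a|‖v‖`. -/
structure QuatBimodule (V : Type*) [NormedAddCommGroup V] [NormedSpace ℝ V] where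
  /-- left multiplication `v ↦ a·v` (real-linear in `v`) -/
  lm : Quaternion ℝ → V →ₗ[ℝ] V
  /-- right multiplication `v ↦ v·a` (real-linear in `v`) -/
  rm : Quaternion ℝ → V →ₗ[ℝ] V
  lm_add : ∀ (a b : Quaternion ℝ) (v : V), lm (a + b) v = lm a v + lm b v
  rm_add : ∀ (a b : Quaternion ℝ) (v : V), rm (a + b) v = rm a v + rm b v
  lm_mul : ∀ (a b : Quaternion ℝ) (v : V), lm (a * b) v = lm a (lm b v)
  rm_mul : ∀ (a b : Quaternion ℝ) (v : V), rm (a * b) v = rm b (rm a v)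
  lm_rm_comm : ∀ (a b : Quaternion ℝ) (v : V), lm a (rm b v) = rm b (lm a v)
  lm_real : ∀ (r : ℝ) (v : V), lm (r : Quaternion ℝ) v = r • v
  rm_real : ∀ (r : ℝ) (v : V), rm (r : Quaternion ℝ) v = r • v
  bound : ∃ C : ℝ, ∀ (a : Quaternion ℝ) (v : V),
    ‖lm a v‖ ≤ C * ‖a‖ * ‖v‖ ∧ ‖rm a v‖ ≤ C * ‖a‖ * ‖v‖

/-- `dom (T²)`. -/
def dom2 {V : Type*} (T : V → V) (D : Set V) : Set V := {u | u ∈ D ∧ T u ∈ D}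

/-- `dom_B (T²) = dom(T²) ∩ B`. -/
def domB2 {V : Type*} (T : V → V) (D Bc : Set V) : Set V := dom2 T D ∩ Bc

/-- The operator `Q_{s,B}[T] u = T²u − 2(Re s) Tu + |s|² u`. -/
noncomputable def Qq {V : Type*} [NormedAddCommGroup V] [NormedSpace ℝ V]
    (T : V → V) (s : Quaternion ℝ) (u : V) : V :=
  T (T u) - (2 * s.re) • T u + (‖s‖ ^ 2) • u

/-- `R` is a bounded two-sided inverse of `Q_{s,B}[T] : dom_B(T²) → V`. -/
def IsInvQ {V : Type*} [NormedAddCommGroup V] [NormedSpace ℝ V]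
    (T : V → V) (D Bc : Set V) (s : Quaternion ℝ) (R : V →L[ℝ] V) : Prop :=
  (∀ v : V, R v ∈ domB2 T D Bc) ∧ (∀ v : V, Qq T s (R v) = v) ∧
    (∀ u ∈ domB2 T D Bc, R (Qq T s u) = u)

/-- The `S`-resolvent set with boundary conditions `ρ_{S,B}(T) ⊆ ℍ`. -/
def rhoSB {V : Type*} [NormedAddCommGroup V] [NormedSpace ℝ V]
    (T : V → V) (D Bc : Set V) : Set (Quaternion ℝ) :=
  {s | ∃ R : V →L[ℝ] V, IsInvQ T D Bc s R}

/-- The left multiplication of a quaternionic bimodule as a continuous real-linear map into the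
bounded operators. -/
theorem QuatBimodule.exists_lmCLM {V : Type*} [NormedAddCommGroup V] [NormedSpace ℝ V]
    (P : QuatBimodule V) :
    ∃ L : Quaternion ℝ →L[ℝ] V →L[ℝ] V, ∀ a v, L a v = P.lm a v := by
  obtain ⟨C, hC⟩ := P.bound
  refine ⟨LinearMap.mkContinuous₂ (LinearMap.mk₂ ℝ (fun a v => P.lm a v) P.lm_add ?_
    (fun a => map_add (P.lm a)) fun c a v => map_smul (P.lm a) c v) C
    fun a v => (hC a v).1, fun a v => rfl⟩
  intro c a v
  rw [← Quaternion.coe_mul_eq_smul, P.lm_mul, P.lm_real]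

/-- A closed operator composed with a bounded operator ranging in its domain is bounded. -/
theorem exists_clm_comp_of_isClosed_graph {V : Type*} [NormedAddCommGroup V] [NormedSpace ℝ V]
    [CompleteSpace V] {T : V → V} {D : Submodule ℝ V}
    (hTadd : ∀ u ∈ D, ∀ v ∈ D, T (u + v) = T u + T v)
    (hTsmul : ∀ (c : ℝ), ∀ u ∈ D, T (c • u) = c • T u)
    (hTclosed : IsClosed {p : V × V | p.1 ∈ D ∧ p.2 = T p.1})
    (R : V →L[ℝ] V) (hR : ∀ v, R v ∈ D) :
    ∃ A : V →L[ℝ] V, ∀ v, A v = T (R v) := by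
  let A : V →ₗ[ℝ] V :=
    { toFun := fun v => T (R v)
      map_add' := fun u v => by rw [map_add, hTadd _ (hR u) _ (hR v)]
      map_smul' := fun c v => by rw [map_smul, hTsmul _ _ (hR v)]; rfl }
  have hA : IsClosed (A.graph : Set (V × V)) := by
    have hcont : Continuous fun p : V × V => (R p.1, p.2) := by fun_prop
    convert hTclosed.preimage hcont using 1
    ext p
    simp [A, LinearMap.mem_graph_iff, hR]
  exact ⟨⟨A, A.continuous_of_isClosed_graph hA⟩, fun v => rfl⟩

/-- Perturbation formula: near a point `p` of the `S`-resolvent set, `Q_{s,B}[T]⁻¹` and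
`T Q_{s,B}[T]⁻¹` are fixed bounded operators composed with a `C¹` family `N s`. -/
theorem exists_contDiffAt_factorization {V : Type*} [NormedAddCommGroup V] [NormedSpace ℝ V]
    [CompleteSpace V] {T : V → V} {D Bc : Submodule ℝ V}
    (hTadd : ∀ u ∈ D, ∀ v ∈ D, T (u + v) = T u + T v)
    (hTsmul : ∀ (c : ℝ), ∀ u ∈ D, T (c • u) = c • T u)
    (hTclosed : IsClosed {p : V × V | p.1 ∈ D ∧ p.2 = T p.1})
    {p : Quaternion ℝ} {R : V →L[ℝ] V} (hR : IsInvQ T (D : Set V) (Bc : Set V) p R) :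
    ∃ (A : V →L[ℝ] V) (N : Quaternion ℝ → V →L[ℝ] V), ContDiffAt ℝ 1 N p ∧
      ∀ᶠ s in nhds p, ∀ R' : V →L[ℝ] V, IsInvQ T (D : Set V) (Bc : Set V) s R' →
        ∀ v, R' v = R (N s v) ∧ T (R' v) = A (N s v) := by
  obtain ⟨A, hA⟩ := exists_clm_comp_of_isClosed_graph hTadd hTsmul hTclosed R
    fun v => (hR.1 v).1.1
  let K : Quaternion ℝ → V →L[ℝ] V := fun s =>
    1 - (2 * (s.re - p.re)) • A + (‖s‖ ^ 2 - ‖p‖ ^ 2) • R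
  have hKp : K p = 1 := by simp [K]
  have hre : ContDiff ℝ 1 fun s : Quaternion ℝ => s.re := by
    have h : (fun s : Quaternion ℝ => s.re) = fun s => inner ℝ s 1 := by
      ext s
      simp [Quaternion.inner_def]
    rw [h]
    exact contDiff_id.inner ℝ contDiff_const
  have hK : ContDiff ℝ 1 K := by
    have hn : ContDiff ℝ 1 fun s : Quaternion ℝ => ‖s‖ ^ 2 := contDiff_norm_sq ℝ
    fun_prop
  have hQK : ∀ s v, Qq T s (R v) = K s v := by
    intro s v
    have h := hR.2.1 v
    simp only [Qq, ← hA] at h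
    simp only [Qq, K, ← hA, add_apply, sub_apply, smul_apply, one_apply_eq_self]
    rw [← sub_eq_zero] at h ⊢
    rw [← h]
    module
  have hunit : ∀ᶠ s in nhds p, IsUnit (K s) :=
    hK.continuous.continuousAt.eventually (by
      rw [hKp]
      exact Units.isOpen.mem_nhds isUnit_one)
  refine ⟨A, fun s => Ring.inverse (K s), ?_, ?_⟩
  · have hinv : ContDiffAt ℝ 1 Ring.inverse (K p) := by
      rw [hKp]
      exact contDiffAt_ringInverse ℝ (1 : (V →L[ℝ] V)ˣ)
    exact hinv.comp p hK.contDiffAt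
  · filter_upwards [hunit] with s hs R' hR' v
    have h : R' v = R (Ring.inverse (K s) v) := by
      rw [← hR'.2.2 _ (hR.1 (Ring.inverse (K s) v)), hQK]
      exact congrArg R' (DFunLike.congr_fun (Ring.mul_inverse_cancel _ hs) v).symm
    exact ⟨h, by rw [h, hA]⟩

/-- the `S`-resolvent operators `s ↦ S_{L,B}^{-1}(s,T)` and
`s ↦ S_{R,B}^{-1}(s,T)` are continuously differentiable on `ρ_{S,B}(T) ⊆ ℍ ≅ ℝ⁴`
with values in the bounded real-linear operators on `V`. -/
theorem stmt8 {V : Type*} [NormedAddCommGroup V] [NormedSpace ℝ V] [CompleteSpace V]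
    (P : QuatBimodule V) (T : V → V) (D Bc : Submodule ℝ V)
    (hBD : (Bc : Set V) ⊆ (D : Set V))
    (hDrm : ∀ (a : Quaternion ℝ), ∀ v ∈ D, P.rm a v ∈ D)
    (hBrm : ∀ (a : Quaternion ℝ), ∀ v ∈ Bc, P.rm a v ∈ Bc)
    (hTadd : ∀ u ∈ D, ∀ v ∈ D, T (u + v) = T u + T v)
    (hTsmul : ∀ (c : ℝ), ∀ u ∈ D, T (c • u) = c • T u)
    (hTrm : ∀ (a : Quaternion ℝ), ∀ u ∈ D, T (P.rm a u) = P.rm a (T u))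
    (hTclosed : IsClosed {p : V × V | p.1 ∈ D ∧ p.2 = T p.1})
    (hne : (rhoSB T (D : Set V) (Bc : Set V)).Nonempty)
    (Rf : Quaternion ℝ → V →L[ℝ] V)
    (hRf : ∀ s ∈ rhoSB T (D : Set V) (Bc : Set V),
      IsInvQ T (D : Set V) (Bc : Set V) s (Rf s))
    (SL SR : Quaternion ℝ → V →L[ℝ] V)
    (hSL : ∀ s ∈ rhoSB T (D : Set V) (Bc : Set V), ∀ v : V,
      SL s v = Rf s (P.lm (star s) v) - T (Rf s v))
    (hSR : ∀ s ∈ rhoSB T (D : Set V) (Bc : Set V), ∀ v : V,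
      SR s v = P.lm (star s) (Rf s v) - T (Rf s v)) :
    ContDiffOn ℝ 1 SL (rhoSB T (D : Set V) (Bc : Set V)) ∧
      ContDiffOn ℝ 1 SR (rhoSB T (D : Set V) (Bc : Set V)) := by
  obtain ⟨L, hL⟩ := P.exists_lmCLM
  let conj : Quaternion ℝ →ₗ[ℝ] Quaternion ℝ :=
    { toFun := star
      map_add' := star_add
      map_smul' := Quaternion.star_smul }
  have hstar : ContDiff ℝ 1 fun s : Quaternion ℝ => L (star s) :=
    L.contDiff.comp conj.toContinuousLinearMap.contDiff
  constructor <;> intro p hp <;>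
    obtain ⟨A, N, hN, hfac⟩ :=
      exists_contDiffAt_factorization hTadd hTsmul hTclosed (hRf p hp)
  · have hF : ContDiffAt ℝ 1 (fun s => ((Rf p).comp (N s)).comp (L (star s)) - A.comp (N s)) p :=
      ((contDiffAt_const.clm_comp hN).clm_comp hstar.contDiffAt).sub
        (contDiffAt_const.clm_comp hN)
    refine hF.contDiffWithinAt.congr_of_eventuallyEq_of_mem ?_ hp
    filter_upwards [self_mem_nhdsWithin, nhdsWithin_le_nhds hfac] with s hs h
    ext v
    simp [hSL s hs, hL, (h _ (hRf s hs) v).2, (h _ (hRf s hs) (P.lm (star s) v)).1]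
  · have hF : ContDiffAt ℝ 1 (fun s => (L (star s)).comp ((Rf p).comp (N s)) - A.comp (N s)) p :=
      (hstar.contDiffAt.clm_comp (contDiffAt_const.clm_comp hN)).sub
        (contDiffAt_const.clm_comp hN)
    refine hF.contDiffWithinAt.congr_of_eventuallyEq_of_mem ?_ hp
    filter_upwards [self_mem_nhdsWithin, nhdsWithin_le_nhds hfac] with s hs h
    ext v
    rw [hSR s hs, (h _ (hRf s hs) v).2, (h _ (hRf s hs) v).1]
    simp [hL]
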